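/- Let μ > 0 and μ + λ ≥ 0. For every p ∈ [2,∞) there exists a constant C = C(μ,λ,p) > 0 such that for every Schwartz vector field u : ℝ² → ℝ² and every Schwartz function P : ℝ² → ℝ, setting F := μΔu + (μ+λ)∇(div u) − ∇P and G := (2μ+λ) div u − P, one has ‖G‖_{L^p(ℝ²)} + ‖curl u‖_{L^p(ℝ²)} ≤ C ‖F‖_{L²(ℝ²)}^{(p−2)/p} (‖∇u‖_{L²(ℝ²)} + ‖P‖_{L²(ℝ²)})^{2/p}. -/

import Mathlib

open MeasureTheory Real Set Metric

noncomputable section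

abbrev E2 := EuclideanSpace ℝ (Fin 2)

/-- The i-th standard basis vector of ℝ². -/
def e2 (i : Fin 2) : E2 := EuclideanSpace.single i (1 : ℝ)

/-- Divergence of a vector field on ℝ²: div u = ∂₁u¹ + ∂₂u². -/
def div2 (u : E2 → E2) (x : E2) : ℝ := ∑ i, fderiv ℝ u x (e2 i) i

/-- Curl (vorticity) of a vector field on ℝ²: curl u = ∂₂u¹ − ∂₁u². -/
def curl2 (u : E2 → E2) (x : E2) : ℝ :=
  fderiv ℝ u x (e2 1) 0 - fderiv ℝ u x (e2 0) 1

/-- Componentwise Laplacian of a vector field: (Δu)ⁱ = ∑ⱼ ∂ⱼ∂ⱼuⁱ. -/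
def lapVec (u : E2 → E2) (x : E2) (i : Fin 2) : ℝ :=
  ∑ j, fderiv ℝ (fun y => fderiv ℝ u y (e2 j) i) x (e2 j)

/-- The momentum flux F = μΔu + (μ+λ)∇(div u) − ∇P. -/
def NSflux (μ lam : ℝ) (u : E2 → E2) (P : E2 → ℝ) (x : E2) : E2 :=
  (EuclideanSpace.equiv (Fin 2) ℝ).symm fun i =>
    μ * lapVec u x i + (μ + lam) * fderiv ℝ (div2 u) x (e2 i) - fderiv ℝ P x (e2 i)

open scoped NNReal ENNReal Topology SchwartzMap LineDeriv
open Filter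

lemma gns_noncompact : ∃ C : ℝ≥0, ∀ v : E2 → ℝ, ContDiff ℝ 1 v → Integrable v →
    Integrable (fun x => fderiv ℝ v x) →
    ∫⁻ x, ‖v x‖ₑ ^ (2:ℝ) ≤ C * (∫⁻ x, ‖fderiv ℝ v x‖ₑ) ^ (2:ℝ) := by
  refine ⟨lintegralPowLePowLIntegralFDerivConst (volume : Measure E2) 2, ?_⟩
  intro v hv hvi hdi
  set C := lintegralPowLePowLIntegralFDerivConst (volume : Measure E2) 2
  have hconj : Real.HolderConjugate (Module.finrank ℝ E2) 2 := by
    simp only [finrank_euclideanSpace, Fintype.card_fin]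
    rw [Real.holderConjugate_iff]; norm_num
  let χ : ContDiffBump (0 : E2) := ⟨1, 2, one_pos, one_lt_two⟩
  have hχ : ContDiff ℝ 1 (χ : E2 → ℝ) := χ.contDiff
  have hχc : HasCompactSupport (χ : E2 → ℝ) := χ.hasCompactSupport
  obtain ⟨M, hM⟩ : ∃ M, ∀ x, ‖fderiv ℝ (χ : E2 → ℝ) x‖ ≤ M :=
    (hχ.continuous_fderiv one_ne_zero).bounded_above_of_compact_support (hχc.fderiv ℝ)
  have hM0 : 0 ≤ M := (norm_nonneg _).trans (hM 0)
  let c : ℕ → ℝ := fun n => ((n:ℝ)+1)⁻¹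
  have hc0 : ∀ n, 0 < c n := fun n => by positivity
  have hc : Tendsto c atTop (𝓝 0) := by
    simpa [c, one_div] using tendsto_one_div_add_atTop_nhds_zero_nat (𝕜 := ℝ)
  let w : ℕ → E2 → ℝ := fun n x => χ (c n • x) * v x
  have hχn : ∀ n, ContDiff ℝ 1 (fun x : E2 => χ (c n • x)) := fun n =>
    hχ.comp (contDiff_const_smul (c n))
  have hw : ∀ n, ContDiff ℝ 1 (w n) := fun n => (hχn n).mul hv
  have hwc : ∀ n, HasCompactSupport (w n) := fun n =>
    HasCompactSupport.mul_right (hχc.comp_smul (hc0 n).ne')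
  have hdw : ∀ n x, ‖fderiv ℝ (w n) x‖ₑ ≤ ‖fderiv ℝ v x‖ₑ + ENNReal.ofReal (c n * M) * ‖v x‖ₑ := by
    intro n x
    have h1 : HasFDerivAt (fun x : E2 => χ (c n • x)) ((c n) • fderiv ℝ (χ : E2 → ℝ) (c n • x)) x := by
      have := ((hχ.differentiable one_ne_zero (c n • x)).hasFDerivAt).comp x
        ((hasFDerivAt_id x).const_smul (c n))
      exact this.congr_fderiv (by ext y; simp)
    have h2 := h1.mul ((hv.differentiable one_ne_zero x).hasFDerivAt)
    have h3 : fderiv ℝ (w n) x = _ := h2.fderiv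
    rw [h3]
    rw [← ofReal_norm, ← ofReal_norm, ← ofReal_norm, ← ENNReal.ofReal_mul (by have := hc0 n; positivity),
      ← ENNReal.ofReal_add (norm_nonneg _) (by have := hc0 n; positivity)]
    apply ENNReal.ofReal_le_ofReal
    refine (norm_add_le _ _).trans ?_
    rw [norm_smul, norm_smul, norm_smul, Real.norm_of_nonneg (hc0 n).le,
      Real.norm_of_nonneg χ.nonneg]
    have a1 := χ.le_one (x := c n • x)
    have a2 : c n * ‖fderiv ℝ (χ : E2 → ℝ) (c n • x)‖ ≤ c n * M :=
      mul_le_mul_of_nonneg_left (hM _) (hc0 n).le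
    calc _ ≤ 1 * ‖fderiv ℝ v x‖ + ‖v x‖ * (c n * M) := by gcongr
      _ = _ := by rw [one_mul, mul_comm ‖v x‖]
  set I := ∫⁻ x, ‖fderiv ℝ v x‖ₑ with hI
  set J := ∫⁻ x, ‖v x‖ₑ with hJ
  have hJt : J ≠ ⊤ := hvi.2.ne
  have hIn : ∀ n, ∫⁻ x, ‖w n x‖ₑ ^ (2:ℝ) ≤ C * (I + ENNReal.ofReal (c n * M) * J) ^ (2:ℝ) := by
    intro n
    refine (lintegral_pow_le_pow_lintegral_fderiv volume (hw n) (hwc n) hconj).trans ?_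
    gcongr
    refine (lintegral_mono (hdw n)).trans ?_
    rw [lintegral_add_left' hdi.1.enorm, lintegral_const_mul'' _ hvi.1.enorm]
  have hlim : Tendsto (fun n => (C:ℝ≥0∞) * (I + ENNReal.ofReal (c n * M) * J) ^ (2:ℝ)) atTop
      (𝓝 (C * I ^ (2:ℝ))) := by
    have h1 : Tendsto (fun n => ENNReal.ofReal (c n * M)) atTop (𝓝 0) := by
      have := ENNReal.tendsto_ofReal (hc.mul_const M)
      simpa using this
    have h2 : Tendsto (fun n => ENNReal.ofReal (c n * M) * J) atTop (𝓝 0) := by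
      simpa using ENNReal.Tendsto.mul_const h1 (Or.inr hJt)
    have h3 : Tendsto (fun n => I + ENNReal.ofReal (c n * M) * J) atTop (𝓝 I) := by
      simpa using h2.const_add I
    exact ENNReal.Tendsto.const_mul ((ENNReal.continuous_rpow_const.tendsto I).comp h3)
      (Or.inr ENNReal.coe_ne_top)
  have hpt : ∀ x, liminf (fun n => ‖w n x‖ₑ ^ (2:ℝ)) atTop = ‖v x‖ₑ ^ (2:ℝ) := by
    intro x
    apply Tendsto.liminf_eq
    apply tendsto_const_nhds.congr'
    have h0 : Tendsto (fun n => c n * ‖x‖) atTop (𝓝 0) := by simpa using hc.mul_const ‖x‖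
    filter_upwards [h0.eventually (gt_mem_nhds one_pos)] with n hn
    have : χ (c n • x) = 1 := by
      apply χ.one_of_mem_closedBall
      rw [mem_closedBall_zero_iff, norm_smul, Real.norm_of_nonneg (hc0 n).le]
      exact hn.le
    simp [w, this]
  calc ∫⁻ x, ‖v x‖ₑ ^ (2:ℝ) = ∫⁻ x, liminf (fun n => ‖w n x‖ₑ ^ (2:ℝ)) atTop := by simp_rw [hpt]
    _ ≤ liminf (fun n => ∫⁻ x, ‖w n x‖ₑ ^ (2:ℝ)) atTop :=
        lintegral_liminf_le' fun n => ((hw n).continuous.aestronglyMeasurable.enorm.pow_const _)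
    _ ≤ liminf (fun n => (C:ℝ≥0∞) * (I + ENNReal.ofReal (c n * M) * J) ^ (2:ℝ)) atTop :=
        liminf_le_liminf (Eventually.of_forall hIn)
    _ = _ := hlim.liminf_eq

lemma schwartz_pow (f : 𝓢(E2, ℝ)) (k : ℕ) : ∃ h : 𝓢(E2, ℝ), ∀ x, h x = f x ^ (k+1) := by
  induction k with
  | zero => exact ⟨f, by simp⟩
  | succ k ih =>
    obtain ⟨h, hh⟩ := ih
    refine ⟨SchwartzMap.pairing (ContinuousLinearMap.mul ℝ ℝ) h f, fun x => ?_⟩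
    simp [hh, pow_succ]

lemma schwartz_int_sq {F : Type*} [NormedAddCommGroup F] [NormedSpace ℝ F]
    (f : 𝓢(E2, F)) : Integrable (fun x => ‖f x‖ ^ 2) := by
  exact (f.memLp 2).integrable_norm_pow two_ne_zero

lemma schwartz_int_fderiv_sq {F : Type*} [NormedAddCommGroup F] [NormedSpace ℝ F]
    (f : 𝓢(E2, F)) : Integrable (fun x => ‖fderiv ℝ f x‖ ^ 2) :=
  schwartz_int_sq (SchwartzMap.fderivCLM ℝ E2 F f)

lemma schwartz_int_pow (f : 𝓢(E2, ℝ)) (k : ℕ) (hk : k ≠ 0) : Integrable (fun x => f x ^ k) := by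
  obtain ⟨m, rfl⟩ := Nat.exists_eq_succ_of_ne_zero hk
  obtain ⟨h, hh⟩ := schwartz_pow f m
  exact (h.integrable (μ := volume)).congr (ae_of_all _ hh)

lemma gn_step (k : ℕ) : ∃ C : ℝ, 0 < C ∧ ∀ f : 𝓢(E2, ℝ),
    ∫ x, f x ^ (2 * (k+2)) ≤ C * (∫ x, f x ^ (2 * (k+1))) * ∫ x, ‖fderiv ℝ f x‖ ^ 2 := by
  obtain ⟨C, hC⟩ := gns_noncompact
  refine ⟨(C+1) * (k+2)^2, by positivity, fun f => ?_⟩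
  obtain ⟨v, hv⟩ := schwartz_pow f (k+1)
  obtain ⟨h, hh⟩ := schwartz_pow f k
  have hvi := v.integrable (μ := (volume : Measure E2))
  have hdi : Integrable (fun x => fderiv ℝ v x) (volume : Measure E2) :=
    (SchwartzMap.fderivCLM ℝ E2 ℝ v).integrable
  have key := hC v (v.smooth 1) hvi hdi
  have hsq := schwartz_int_sq v
  have e1 : ∫⁻ x, ‖v x‖ₑ ^ (2:ℝ) = ENNReal.ofReal (∫ x, ‖v x‖ ^ 2) := by
    rw [ofReal_integral_eq_lintegral_ofReal hsq (ae_of_all _ fun x => by positivity)]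
    congr 1; ext x
    rw [← ofReal_norm, ENNReal.ofReal_pow (norm_nonneg _)]
    norm_cast
  have e2 : ∫⁻ x, ‖fderiv ℝ v x‖ₑ = ENNReal.ofReal (∫ x, ‖fderiv ℝ v x‖) :=
    (ofReal_integral_norm_eq_lintegral_enorm hdi).symm
  have hI0 : 0 ≤ ∫ x, ‖fderiv ℝ v x‖ := integral_nonneg fun x => norm_nonneg _
  rw [e1, e2, ENNReal.ofReal_rpow_of_nonneg hI0 (by norm_num), ← ENNReal.ofReal_coe_nnreal,
    ← ENNReal.ofReal_mul (by positivity), ENNReal.ofReal_le_ofReal_iff (by positivity)] at key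
  have e3 : ∀ x, ‖fderiv ℝ v x‖ = (k+2) * (‖h x‖ * ‖fderiv ℝ f x‖) := by
    intro x
    have : (v : E2 → ℝ) = fun x => f x ^ (k+2) := funext hv
    rw [this, fderiv_fun_pow _ f.differentiableAt, norm_smul, hh]
    have hk : |(k:ℝ) + 2| = k + 2 := abs_of_nonneg (by positivity)
    simp [nsmul_eq_mul, mul_assoc, hk]
  have hfm : MemLp (fun x => ‖fderiv ℝ f x‖) (ENNReal.ofReal 2) (volume : Measure E2) :=
    ((SchwartzMap.fderivCLM ℝ E2 ℝ f).memLp (ENNReal.ofReal 2) volume).norm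
  have cs := integral_mul_le_Lp_mul_Lq_of_nonneg (μ := (volume : Measure E2))
    Real.HolderConjugate.two_two (f := fun x => ‖h x‖) (g := fun x => ‖fderiv ℝ f x‖)
    (ae_of_all _ fun x => norm_nonneg _) (ae_of_all _ fun x => norm_nonneg _)
    (h.memLp _).norm hfm
  simp_rw [e3, integral_const_mul] at key
  have cs0 : 0 ≤ ∫ x, ‖h x‖ * ‖fderiv ℝ f x‖ := integral_nonneg fun x => by positivity
  have A0 : 0 ≤ ∫ x, ‖h x‖ ^ 2 := integral_nonneg fun x => by positivity
  have D0 : 0 ≤ ∫ x, ‖fderiv ℝ f x‖ ^ 2 := integral_nonneg fun x => by positivity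
  simp only [Real.rpow_ofNat, ← Real.sqrt_eq_rpow] at cs key
  have cs2 : (∫ x, ‖h x‖ * ‖fderiv ℝ f x‖) ^ 2 ≤ (∫ x, ‖h x‖ ^ 2) * ∫ x, ‖fderiv ℝ f x‖ ^ 2 := by
    calc _ ≤ _ := pow_le_pow_left₀ cs0 cs 2
      _ = _ := by rw [mul_pow, Real.sq_sqrt A0, Real.sq_sqrt D0]
  have e4 : ∫ x, ‖v x‖ ^ 2 = ∫ x, f x ^ (2 * (k+2)) := by
    congr 1; ext x; rw [hv, Real.norm_eq_abs, sq_abs]; ring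
  have e5 : ∫ x, ‖h x‖ ^ 2 = ∫ x, f x ^ (2 * (k+1)) := by
    congr 1; ext x; rw [hh, Real.norm_eq_abs, sq_abs]; ring
  rw [e4] at key
  rw [e5] at cs2 A0
  refine key.trans ?_
  calc (C:ℝ) * ((k+2) * ∫ x, ‖h x‖ * ‖fderiv ℝ f x‖) ^ 2
      = C * (k+2)^2 * (∫ x, ‖h x‖ * ‖fderiv ℝ f x‖) ^ 2 := by ring
    _ ≤ (C+1) * (k+2)^2 * ((∫ x, f x ^ (2 * (k+1))) * ∫ x, ‖fderiv ℝ f x‖ ^ 2) := by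
        gcongr; linarith
    _ = _ := by ring

lemma gn_even (k : ℕ) : ∃ C : ℝ, 0 < C ∧ ∀ f : 𝓢(E2, ℝ),
    ∫ x, f x ^ (2 * (k+1)) ≤ C * (∫ x, f x ^ 2) * (∫ x, ‖fderiv ℝ f x‖ ^ 2) ^ k := by
  induction k with
  | zero => exact ⟨1, one_pos, by simp⟩
  | succ k ih =>
    obtain ⟨C, hC, h⟩ := ih
    obtain ⟨C', hC', h'⟩ := gn_step k
    refine ⟨C' * C, by positivity, fun f => (h' f).trans ?_⟩
    have D0 : 0 ≤ ∫ x, ‖fderiv ℝ f x‖ ^ 2 := integral_nonneg fun x => by positivity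
    calc _ ≤ C' * (C * (∫ x, f x ^ 2) * (∫ x, ‖fderiv ℝ f x‖ ^ 2) ^ k) *
          ∫ x, ‖fderiv ℝ f x‖ ^ 2 := by gcongr; exact h f
      _ = _ := by ring

lemma gn_real (p : ℝ) (hp : 2 ≤ p) : ∃ C : ℝ, 0 < C ∧ ∀ f : 𝓢(E2, ℝ),
    ∫ x, |f x| ^ p ≤ C * (∫ x, f x ^ 2) * (∫ x, ‖fderiv ℝ f x‖ ^ 2) ^ (p / 2 - 1) := by
  rcases hp.eq_or_lt with rfl | hp2
  · exact ⟨1, one_pos, fun f => by norm_num⟩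
  obtain ⟨k, hk⟩ := exists_nat_ge p
  obtain ⟨C, hC, h⟩ := gn_even (k+1)
  refine ⟨1 + C, by positivity, fun f => ?_⟩
  set D := ∫ x, ‖fderiv ℝ f x‖ ^ 2 with hD
  have D0 : 0 ≤ D := integral_nonneg fun x => by positivity
  have hf := h f
  have i2 := schwartz_int_pow f 2 two_ne_zero
  have ik := schwartz_int_pow f (2*(k+1+1)) (by positivity)
  have pt : ∀ t : ℝ, 0 < t → ∀ x,
      |f x| ^ p ≤ t ^ (p-2) * f x ^ 2 + t ^ (p - (2*(k+1+1) : ℕ)) * f x ^ (2*(k+1+1)) := by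
    intro t ht x
    have hev : Even (2*(k+1+1)) := even_two_mul _
    rw [← sq_abs (f x), ← hev.pow_abs (f x)]
    rcases (abs_nonneg (f x)).eq_or_lt with h0 | h0
    · rw [← h0, Real.zero_rpow (by linarith)]; positivity
    rcases le_total |f x| t with hl | hl
    · have : |f x| ^ p = |f x| ^ (p-2) * |f x| ^ 2 := by
        rw [← Real.rpow_natCast, ← Real.rpow_add h0]; congr 1; norm_num
      rw [this]
      have := Real.rpow_le_rpow h0.le hl (show 0 ≤ p - 2 by linarith)
      have h3 : 0 ≤ t ^ (p - (2*(k+1+1) : ℕ)) * |f x| ^ (2*(k+1+1)) := by positivity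
      nlinarith [sq_nonneg |f x|]
    · have : |f x| ^ p = |f x| ^ (p-(2*(k+1+1) : ℕ)) * |f x| ^ (2*(k+1+1)) := by
        rw [← Real.rpow_natCast, ← Real.rpow_add h0]; congr 1; ring
      rw [this]
      have h4 := Real.rpow_le_rpow_of_nonpos ht hl
        (show p - (2*(k+1+1) : ℕ) ≤ 0 by push_cast; linarith)
      have h3 : 0 ≤ t ^ (p - 2) * |f x| ^ 2 := by positivity
      have h5 := mul_le_mul_of_nonneg_right h4 (show 0 ≤ |f x| ^ (2*(k+1+1)) by positivity)
      linarith
  have bd : ∀ t : ℝ, 0 < t → ∫ x, |f x| ^ p ≤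
      t ^ (p-2) * (∫ x, f x ^ 2) + t ^ (p - (2*(k+1+1) : ℕ)) * ∫ x, f x ^ (2*(k+1+1)) := by
    intro t ht
    rw [← integral_const_mul, ← integral_const_mul,
      ← integral_add (i2.const_mul _) (ik.const_mul _)]
    exact integral_mono_of_nonneg (ae_of_all _ fun x => by positivity)
      ((i2.const_mul _).add (ik.const_mul _)) (ae_of_all _ (pt t ht))
  rcases D0.eq_or_lt with h0 | h0
  · rw [← hD, ← h0] at hf; rw [← h0]
    rw [Real.zero_rpow (by linarith), mul_zero]
    rw [zero_pow (by positivity), mul_zero] at hf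
    have lim : Tendsto (fun t : ℝ => t ^ (p-2) * (∫ x, f x ^ 2)) (𝓝[>] 0) (𝓝 0) := by
      have : Tendsto (fun t : ℝ => t ^ (p-2) * (∫ x, f x ^ 2)) (𝓝 0)
          (𝓝 ((0:ℝ) ^ (p-2) * (∫ x, f x ^ 2))) :=
        ((Real.continuousAt_rpow_const 0 (p-2) (Or.inr (by linarith))).tendsto).mul_const _
      rw [Real.zero_rpow (by linarith), zero_mul] at this
      exact this.mono_left nhdsWithin_le_nhds
    refine ge_of_tendsto lim ?_
    filter_upwards [self_mem_nhdsWithin] with t ht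
    have ht : 0 < t := ht
    refine (bd t ht).trans ?_
    have : t ^ (p - (2*(k+1+1) : ℕ)) * ∫ x, f x ^ (2*(k+1+1)) ≤ 0 :=
      mul_nonpos_of_nonneg_of_nonpos (by positivity) hf
    linarith
  · refine (bd (D ^ (1/2 : ℝ)) (by positivity)).trans ?_
    rw [← Real.rpow_mul h0.le, ← Real.rpow_mul h0.le]
    have e1 : (1/2 : ℝ) * (p - 2) = p/2 - 1 := by ring
    have e2 : D ^ ((1/2 : ℝ) * (p - (2*(k+1+1) : ℕ))) * D ^ (k+1) = D ^ (p/2-1) := by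
      rw [← Real.rpow_natCast, ← Real.rpow_add h0]; congr 1; push_cast; ring
    rw [e1]
    calc _ ≤ D ^ (p/2-1) * (∫ x, f x ^ 2) + D ^ ((1/2 : ℝ) * (p - (2*(k+1+1) : ℕ))) *
          (C * (∫ x, f x ^ 2) * D ^ (k+1)) := by gcongr
      _ = D ^ (p/2-1) * (∫ x, f x ^ 2) + C * (∫ x, f x ^ 2) *
          (D ^ ((1/2 : ℝ) * (p - (2*(k+1+1) : ℕ))) * D ^ (k+1)) := by ring
      _ = _ := by rw [e2]; ring

lemma lineDeriv_comm2 (f : 𝓢(E2, ℝ)) (v w : E2) : (∂_{v} (∂_{w} f) : 𝓢(E2, ℝ)) = ∂_{w} (∂_{v} f) := by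
  have key : ∀ (a b x : E2), (∂_{a} (∂_{b} f) : 𝓢(E2, ℝ)) x = fderiv ℝ (fderiv ℝ f) x a b := by
    intro a b x
    rw [SchwartzMap.lineDerivOp_apply_eq_fderiv]
    have h1 : (⇑(∂_{b} f : 𝓢(E2, ℝ)) : E2 → ℝ) = fun y => fderiv ℝ f y b := by
      ext y; rw [SchwartzMap.lineDerivOp_apply_eq_fderiv]
    have h2 : DifferentiableAt ℝ (fderiv ℝ f) x :=
      (SchwartzMap.fderivCLM ℝ E2 ℝ f).differentiableAt
    rw [h1, fderiv_clm_apply h2 (by fun_prop)]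
    simp
  ext x
  rw [key, key]
  have : IsSymmSndFDerivAt ℝ f x := by
    apply (f.smooth 2).contDiffAt.isSymmSndFDerivAt
    simp
  exact this v w

lemma lineDeriv_sub2 (f g : 𝓢(E2, ℝ)) (v : E2) :
    (∂_{v} (f - g) : 𝓢(E2, ℝ)) = ∂_{v} f - ∂_{v} g := by
  rw [sub_eq_add_neg, LineDeriv.lineDerivOp_add, LineDeriv.lineDerivOp_neg, ← sub_eq_add_neg]

lemma fderiv_sq_le (f : 𝓢(E2, ℝ)) (x : E2) :
    ‖fderiv ℝ f x‖ ^ 2 ≤ (∂_{e2 0} f : 𝓢(E2, ℝ)) x ^ 2 + (∂_{e2 1} f : 𝓢(E2, ℝ)) x ^ 2 := by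
  simp only [SchwartzMap.lineDerivOp_apply_eq_fderiv]
  set L := fderiv ℝ f x
  have hn : 0 ≤ L (e2 0) ^ 2 + L (e2 1) ^ 2 := by positivity
  rw [← Real.sq_sqrt hn]
  apply pow_le_pow_left₀ (norm_nonneg _)
  apply L.opNorm_le_bound (Real.sqrt_nonneg _)
  intro y
  have hy : y = y 0 • e2 0 + y 1 • e2 1 := by
    ext i; fin_cases i <;> simp [e2]
  have h1 : L y = y 0 * L (e2 0) + y 1 * L (e2 1) := by
    conv_lhs => rw [hy]
    simp
  rw [EuclideanSpace.norm_eq, ← Real.sqrt_mul hn, Real.norm_eq_abs]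
  apply Real.abs_le_sqrt
  rw [h1]
  simp only [Fin.sum_univ_two, Real.norm_eq_abs, sq_abs]
  nlinarith [sq_nonneg (y 0 * L (e2 1) - y 1 * L (e2 0))]

lemma int_mul (f g : 𝓢(E2, ℝ)) : Integrable (fun x => f x * g x) :=
  (SchwartzMap.pairing (ContinuousLinearMap.mul ℝ ℝ) f g).integrable (μ := volume)

lemma cross_zero (f g : 𝓢(E2, ℝ)) (v w : E2) :
    ∫ x, (∂_{v} f : 𝓢(E2, ℝ)) x * (∂_{w} g : 𝓢(E2, ℝ)) x =
    ∫ x, (∂_{w} f : 𝓢(E2, ℝ)) x * (∂_{v} g : 𝓢(E2, ℝ)) x := by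
  have h1 := SchwartzMap.integral_mul_lineDerivOp_right_eq_neg_left (μ := volume) f (∂_{w} g) v
  have h2 := SchwartzMap.integral_mul_lineDerivOp_right_eq_neg_left (μ := volume) f (∂_{v} g) w
  rw [lineDeriv_comm2] at h1
  linarith

lemma flux_energy (G w : 𝓢(E2, ℝ)) (μ : ℝ) :
    (∫ x, ‖fderiv ℝ G x‖ ^ 2) + μ ^ 2 * (∫ x, ‖fderiv ℝ w x‖ ^ 2) ≤
    ∫ x, (((∂_{e2 0} G : 𝓢(E2, ℝ)) x + μ * (∂_{e2 1} w : 𝓢(E2, ℝ)) x) ^ 2 +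
      ((∂_{e2 1} G : 𝓢(E2, ℝ)) x - μ * (∂_{e2 0} w : 𝓢(E2, ℝ)) x) ^ 2) := by
  set G0 : 𝓢(E2, ℝ) := ∂_{e2 0} G with hG0
  set G1 : 𝓢(E2, ℝ) := ∂_{e2 1} G with hG1
  set w0 : 𝓢(E2, ℝ) := ∂_{e2 0} w with hw0
  set w1 : 𝓢(E2, ℝ) := ∂_{e2 1} w with hw1
  have hx : ∫ x, G0 x * w1 x = ∫ x, G1 x * w0 x := cross_zero G w (e2 0) (e2 1)
  have e : ∫ x, ((G0 x + μ * w1 x) ^ 2 + (G1 x - μ * w0 x) ^ 2) =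
      (∫ x, (G0 x ^ 2 + G1 x ^ 2)) + μ ^ 2 * (∫ x, (w0 x ^ 2 + w1 x ^ 2)) := by
    have : ∀ x, (G0 x + μ * w1 x) ^ 2 + (G1 x - μ * w0 x) ^ 2 =
      ((G0 x ^ 2 + G1 x ^ 2) + μ ^ 2 * (w0 x ^ 2 + w1 x ^ 2)) +
        2 * μ * (G0 x * w1 x - G1 x * w0 x) := fun x => by ring
    simp_rw [this]
    have i1 : Integrable (fun x => G0 x ^ 2 + G1 x ^ 2) :=
      (schwartz_int_pow G0 2 two_ne_zero).add (schwartz_int_pow G1 2 two_ne_zero)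
    have i2 : Integrable (fun x => w0 x ^ 2 + w1 x ^ 2) :=
      (schwartz_int_pow w0 2 two_ne_zero).add (schwartz_int_pow w1 2 two_ne_zero)
    have i3 : Integrable (fun x => G0 x * w1 x - G1 x * w0 x) := (int_mul _ _).sub (int_mul _ _)
    have i4 : Integrable (fun x => (G0 x ^ 2 + G1 x ^ 2) + μ ^ 2 * (w0 x ^ 2 + w1 x ^ 2)) :=
      i1.add (i2.const_mul _)
    rw [integral_add i4 (i3.const_mul _), integral_add i1 (i2.const_mul _),
      integral_const_mul, integral_const_mul, integral_sub (int_mul _ _) (int_mul _ _), hx]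
    ring
  rw [e]
  have b : ∀ f : 𝓢(E2, ℝ), ∫ x, ‖fderiv ℝ f x‖ ^ 2 ≤
      ∫ x, ((∂_{e2 0} f : 𝓢(E2, ℝ)) x ^ 2 + (∂_{e2 1} f : 𝓢(E2, ℝ)) x ^ 2) := fun f =>
    integral_mono (schwartz_int_fderiv_sq f)
      ((schwartz_int_pow _ 2 two_ne_zero).add (schwartz_int_pow _ 2 two_ne_zero))
      (fderiv_sq_le f)
  have b1 := b G
  have b2 := mul_le_mul_of_nonneg_left (b w) (sq_nonneg μ)
  exact add_le_add b1 b2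

lemma final_bound {p : ℝ} (hp : 2 ≤ p) {C K A S D Q N : ℝ} (hC : 0 ≤ C) (hK : 0 ≤ K)
    (hA : 0 ≤ A) (hS : 0 ≤ S) (hD : 0 ≤ D) (hN : 0 ≤ N)
    (h1 : A ≤ C * S * D ^ (p / 2 - 1)) (h2 : S ≤ K * N ^ 2) {m : ℝ} (hm : 0 ≤ m) (hQ : 0 ≤ Q)
    (h3 : D ≤ m * Q) :
    A ^ (1 / p) ≤ (C * K * m ^ (p / 2 - 1)) ^ (1 / p) *
      (Q ^ (1 / 2 : ℝ)) ^ ((p - 2) / p) * N ^ (2 / p) := by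
  have hp0 : 0 < p := by linarith
  have hq : 0 ≤ p / 2 - 1 := by linarith
  have h4 : A ≤ (C * K * m ^ (p / 2 - 1)) * Q ^ (p / 2 - 1) * N ^ 2 := by
    calc A ≤ C * S * D ^ (p / 2 - 1) := h1
      _ ≤ C * (K * N ^ 2) * (m * Q) ^ (p / 2 - 1) := by gcongr
      _ = _ := by rw [Real.mul_rpow hm hQ]; ring
  calc A ^ (1/p) ≤ ((C * K * m ^ (p / 2 - 1)) * Q ^ (p / 2 - 1) * N ^ 2) ^ (1/p) := by gcongr
    _ = _ := by
      rw [Real.mul_rpow (by positivity) (by positivity), Real.mul_rpow (by positivity) (by positivity),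
        ← Real.rpow_mul hQ, ← Real.rpow_mul hQ, ← Real.rpow_natCast N 2, ← Real.rpow_mul hN]
      have x1 : (p / 2 - 1) * (1 / p) = 1 / 2 * ((p - 2) / p) := by field_simp
      have x2 : ((2:ℕ):ℝ) * (1 / p) = 2 / p := by push_cast; ring
      rw [x1, x2]

lemma comp_deriv (u : 𝓢(E2, E2)) (i j : Fin 2) (x : E2) :
    fderiv ℝ u x (e2 i) j =
      (∂_{e2 i} (SchwartzMap.postcompCLM (EuclideanSpace.proj j : E2 →L[ℝ] ℝ) u) : 𝓢(E2, ℝ)) x := by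
  rw [SchwartzMap.lineDerivOp_apply_eq_fderiv]
  have h := ((EuclideanSpace.proj j : E2 →L[ℝ] ℝ).hasFDerivAt.comp x (u.hasFDerivAt x)).fderiv
  have h2 : (⇑(SchwartzMap.postcompCLM (EuclideanSpace.proj j : E2 →L[ℝ] ℝ) u) : E2 → ℝ) =
    (EuclideanSpace.proj j : E2 →L[ℝ] ℝ) ∘ u := rfl
  rw [h2, h]; rfl

lemma abs_comp_le (L : E2 →L[ℝ] E2) (i j : Fin 2) : |L (e2 i) j| ≤ ‖L‖ := by
  have h1 : ‖e2 i‖ = 1 := by simp [e2]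
  calc |L (e2 i) j| ≤ ‖L (e2 i)‖ := by
        simpa using PiLp.norm_apply_le (L (e2 i)) j
    _ ≤ ‖L‖ * ‖e2 i‖ := L.le_opNorm _
    _ = ‖L‖ := by rw [h1, mul_one]

theorem effective_flux_interpolation_estimate (μ lam : ℝ) (hμ : 0 < μ) (hlam : 0 ≤ μ + lam)
    (p : ℝ) (hp : 2 ≤ p) :
    ∃ C : ℝ, 0 < C ∧ ∀ (u : SchwartzMap E2 E2) (P : SchwartzMap E2 ℝ),
      (∫ x : E2, |(2 * μ + lam) * div2 (⇑u) x - P x| ^ p) ^ (1 / p) +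
      (∫ x : E2, |curl2 (⇑u) x| ^ p) ^ (1 / p) ≤
        C * ((∫ x : E2, ‖NSflux μ lam (⇑u) (⇑P) x‖ ^ 2) ^ (1 / 2 : ℝ)) ^ ((p - 2) / p) *
          ((∫ x : E2, ‖fderiv ℝ (⇑u) x‖ ^ 2) ^ (1 / 2 : ℝ) +
           (∫ x : E2, (P x) ^ 2) ^ (1 / 2 : ℝ)) ^ (2 / p) := by
  obtain ⟨C, hC, hGN⟩ := gn_real p hp
  set ν := 2 * μ + lam with hν
  set K : ℝ := 8 * ν ^ 2 + 2 + 4 with hK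
  have hK0 : 0 < K := by positivity
  refine ⟨(C * K * 1 ^ (p / 2 - 1)) ^ (1 / p) + (C * K * ((μ ^ 2)⁻¹) ^ (p / 2 - 1)) ^ (1 / p),
    by positivity, fun u P => ?_⟩
  let U : Fin 2 → 𝓢(E2, ℝ) := fun j =>
    SchwartzMap.postcompCLM (EuclideanSpace.proj j : E2 →L[ℝ] ℝ) u
  let G : 𝓢(E2, ℝ) := ν • (∂_{e2 0} (U 0) + ∂_{e2 1} (U 1)) - P
  let w : 𝓢(E2, ℝ) := ∂_{e2 1} (U 0) - ∂_{e2 0} (U 1)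
  have hdiv : (div2 u) = ⇑(∂_{e2 0} (U 0) + ∂_{e2 1} (U 1) : 𝓢(E2, ℝ)) := by
    ext x; simp only [div2, Fin.sum_univ_two, comp_deriv]; rfl
  have hG : ∀ x, ν * div2 u x - P x = G x := by
    intro x; rw [hdiv]; rfl
  have hw : ∀ x, curl2 u x = w x := by
    intro x; simp only [curl2, comp_deriv]; rfl
  have hlap : ∀ x i, lapVec u x i =
      (∂_{e2 0} (∂_{e2 0} (U i)) : 𝓢(E2, ℝ)) x + (∂_{e2 1} (∂_{e2 1} (U i)) : 𝓢(E2, ℝ)) x := by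
    intro x i; simp only [lapVec, Fin.sum_univ_two, comp_deriv]; rfl
  have hflux : ∀ x, ‖NSflux μ lam u P x‖ ^ 2 =
      ((∂_{e2 0} G : 𝓢(E2, ℝ)) x + μ * (∂_{e2 1} w : 𝓢(E2, ℝ)) x) ^ 2 +
      ((∂_{e2 1} G : 𝓢(E2, ℝ)) x - μ * (∂_{e2 0} w : 𝓢(E2, ℝ)) x) ^ 2 := by
    intro x
    have d : ∀ i, fderiv ℝ (div2 u) x (e2 i) =
        (∂_{e2 i} (∂_{e2 0} (U 0)) : 𝓢(E2, ℝ)) x + (∂_{e2 i} (∂_{e2 1} (U 1)) : 𝓢(E2, ℝ)) x := by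
      intro i
      rw [hdiv, ← SchwartzMap.lineDerivOp_apply_eq_fderiv, LineDeriv.lineDerivOp_add]; rfl
    have dG : ∀ i, (∂_{e2 i} G : 𝓢(E2, ℝ)) x =
        ν * ((∂_{e2 i} (∂_{e2 0} (U 0)) : 𝓢(E2, ℝ)) x + (∂_{e2 i} (∂_{e2 1} (U 1)) : 𝓢(E2, ℝ)) x)
          - (∂_{e2 i} P : 𝓢(E2, ℝ)) x := by
      intro i
      simp only [G, LineDeriv.lineDerivOp_add, lineDeriv_sub2, LineDeriv.lineDerivOp_smul]
      rfl
    have dw : ∀ i, (∂_{e2 i} w : 𝓢(E2, ℝ)) x =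
        (∂_{e2 i} (∂_{e2 1} (U 0)) : 𝓢(E2, ℝ)) x - (∂_{e2 i} (∂_{e2 0} (U 1)) : 𝓢(E2, ℝ)) x := by
      intro i
      simp only [w, lineDeriv_sub2]
      rfl
    rw [EuclideanSpace.norm_sq_eq, Fin.sum_univ_two]
    simp only [Real.norm_eq_abs, sq_abs]
    have c0 : NSflux μ lam u P x 0 = (∂_{e2 0} G : 𝓢(E2, ℝ)) x + μ * (∂_{e2 1} w : 𝓢(E2, ℝ)) x := by
      change μ * lapVec u x 0 + (μ + lam) * fderiv ℝ (div2 u) x (e2 0) - fderiv ℝ P x (e2 0) = _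
      rw [hlap, d, dG, dw, ← SchwartzMap.lineDerivOp_apply_eq_fderiv,
        lineDeriv_comm2 (U 1) (e2 1) (e2 0), hν]
      ring
    have c1 : NSflux μ lam u P x 1 = (∂_{e2 1} G : 𝓢(E2, ℝ)) x - μ * (∂_{e2 0} w : 𝓢(E2, ℝ)) x := by
      change μ * lapVec u x 1 + (μ + lam) * fderiv ℝ (div2 u) x (e2 1) - fderiv ℝ P x (e2 1) = _
      rw [hlap, d, dG, dw, ← SchwartzMap.lineDerivOp_apply_eq_fderiv,
        lineDeriv_comm2 (U 0) (e2 1) (e2 0), hν]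
      ring
    rw [c0, c1]
  have hen := flux_energy G w μ
  simp_rw [← hflux] at hen
  simp_rw [hG, hw]
  set Q := ∫ x, ‖NSflux μ lam u P x‖ ^ 2 with hQ
  set a := ∫ x, ‖fderiv ℝ u x‖ ^ 2 with ha
  set b := ∫ x, P x ^ 2 with hb
  have hQ0 : 0 ≤ Q := integral_nonneg fun x => by positivity
  have ha0 : 0 ≤ a := integral_nonneg fun x => by positivity
  have hb0 : 0 ≤ b := integral_nonneg fun x => by positivity
  have DG0 : 0 ≤ ∫ x, ‖fderiv ℝ G x‖ ^ 2 := integral_nonneg fun x => by positivity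
  have Dw0 : 0 ≤ ∫ x, ‖fderiv ℝ w x‖ ^ 2 := integral_nonneg fun x => by positivity
  set N := a ^ (1/2 : ℝ) + b ^ (1/2 : ℝ) with hN
  have hN0 : 0 ≤ N := by positivity
  have hNab : a + b ≤ N ^ 2 := by
    rw [hN, ← Real.sqrt_eq_rpow, ← Real.sqrt_eq_rpow]
    nlinarith [Real.sq_sqrt ha0, Real.sq_sqrt hb0, Real.sqrt_nonneg a, Real.sqrt_nonneg b]
  have ia := schwartz_int_fderiv_sq u
  have ib := schwartz_int_pow P 2 two_ne_zero
  have gen : ∀ g : 𝓢(E2, ℝ), (∀ x, g x ^ 2 ≤ K * (‖fderiv ℝ u x‖ ^ 2 + P x ^ 2)) →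
      ∫ x, g x ^ 2 ≤ K * N ^ 2 := by
    intro g hg
    calc ∫ x, g x ^ 2 ≤ ∫ x, K * (‖fderiv ℝ u x‖ ^ 2 + P x ^ 2) :=
          integral_mono (schwartz_int_pow g 2 two_ne_zero) ((ia.add ib).const_mul K) hg
      _ = K * (a + b) := by rw [integral_const_mul, integral_add ia ib]
      _ ≤ K * N ^ 2 := by gcongr
  have sG : ∫ x, G x ^ 2 ≤ K * N ^ 2 := by
    apply gen
    intro x
    rw [← hG, div2, Fin.sum_univ_two]
    have h0 := abs_le.1 (abs_comp_le (fderiv ℝ u x) 0 0)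
    have h1 := abs_le.1 (abs_comp_le (fderiv ℝ u x) 1 1)
    set s := fderiv ℝ u x (e2 0) 0
    set t := fderiv ℝ u x (e2 1) 1
    set n := ‖fderiv ℝ u x‖
    have h2 : (s + t) ^ 2 ≤ 4 * n ^ 2 := by nlinarith
    have h3 := mul_le_mul_of_nonneg_left h2 (sq_nonneg ν)
    have h4 : 0 ≤ ν ^ 2 * P x ^ 2 := by positivity
    rw [hK]
    nlinarith [sq_nonneg (ν * (s + t) + P x), sq_nonneg n, sq_nonneg (P x)]
  have sw : ∫ x, w x ^ 2 ≤ K * N ^ 2 := by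
    apply gen
    intro x
    rw [← hw, curl2]
    have h0 := abs_le.1 (abs_comp_le (fderiv ℝ u x) 1 0)
    have h1 := abs_le.1 (abs_comp_le (fderiv ℝ u x) 0 1)
    set s := fderiv ℝ u x (e2 1) 0
    set t := fderiv ℝ u x (e2 0) 1
    set n := ‖fderiv ℝ u x‖
    have h2 : (s - t) ^ 2 ≤ 4 * n ^ 2 := by nlinarith
    have h4 : 0 ≤ ν ^ 2 * P x ^ 2 := by positivity
    have h5 : 0 ≤ ν ^ 2 * n ^ 2 := by positivity
    rw [hK]
    nlinarith [sq_nonneg n, sq_nonneg (P x)]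
  have dG : ∫ x, ‖fderiv ℝ G x‖ ^ 2 ≤ 1 * Q := by
    have : 0 ≤ μ ^ 2 * ∫ x, ‖fderiv ℝ w x‖ ^ 2 := by positivity
    linarith
  have dw : ∫ x, ‖fderiv ℝ w x‖ ^ 2 ≤ (μ ^ 2)⁻¹ * Q := by
    rw [← div_eq_inv_mul, le_div_iff₀ (by positivity)]
    linarith
  have f1 := final_bound hp hC.le hK0.le
    (integral_nonneg fun x => by positivity) (integral_nonneg fun x => by positivity) DG0 hN0
    (hGN G) sG zero_le_one hQ0 dG
  have f2 := final_bound hp hC.le hK0.le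
    (integral_nonneg fun x => by positivity) (integral_nonneg fun x => by positivity) Dw0 hN0
    (hGN w) sw (by positivity) hQ0 dw
  rw [add_mul, add_mul]
  exact add_le_add f1 f2
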